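/- For every m >= 3, the boolean quadric polytope P(C_m) of the cycle C_m is exactly the set of points of Q(C_m) that satisfy the odd cycle inequality OC(A) for every odd-cardinality subset A of the edge set of C_m. -/

import Mathlib

open MeasureTheory Filter

noncomputable section

/-- The standard relaxation `Q(G)` of the boolean quadric polytope of a graph `G`:
the set of points of `[0,1]^(V + E)` satisfying, for each edge `(i,j)`,
`0 ≤ y_{ij}`, `y_{ij} ≤ x_i`, `y_{ij} ≤ x_j` and `x_i + x_j ≤ 1 + y_{ij}`. -/
def QSet {V : Type*} (G : SimpleGraph V) : Set ((V → ℝ) × (↥G.edgeSet → ℝ)) :=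
  {p | (∀ i, p.1 i ∈ Set.Icc (0 : ℝ) 1) ∧ (∀ e, p.2 e ∈ Set.Icc (0 : ℝ) 1) ∧
    ∀ (i j : V) (h : G.Adj i j),
      0 ≤ p.2 ⟨s(i, j), (SimpleGraph.mem_edgeSet _).mpr h⟩ ∧
      p.2 ⟨s(i, j), (SimpleGraph.mem_edgeSet _).mpr h⟩ ≤ p.1 i ∧
      p.2 ⟨s(i, j), (SimpleGraph.mem_edgeSet _).mpr h⟩ ≤ p.1 j ∧
      p.1 i + p.1 j ≤ 1 + p.2 ⟨s(i, j), (SimpleGraph.mem_edgeSet _).mpr h⟩}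

/-- The boolean quadric polytope `P(G)` of a graph `G`: the convex hull of the 0/1
points with `y_{ij} = x_i * x_j` for every edge `(i,j)`. -/
def BQPSet {V : Type*} (G : SimpleGraph V) : Set ((V → ℝ) × (↥G.edgeSet → ℝ)) :=
  convexHull ℝ {p | (∀ i, p.1 i = 0 ∨ p.1 i = 1) ∧
    ∀ (i j : V) (h : G.Adj i j),
      p.2 ⟨s(i, j), (SimpleGraph.mem_edgeSet _).mpr h⟩ = p.1 i * p.1 j}

/-- The cycle `C_m` with `m` vertices and (for `m ≥ 3`) `m` edges. -/
def cycleG (m : ℕ) : SimpleGraph (Fin m) :=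
  SimpleGraph.fromRel (fun i j => ((i : ℕ) + 1) % m = (j : ℕ))

instance (m : ℕ) : DecidableRel (cycleG m).Adj := fun i j =>
  decidable_of_iff _ (SimpleGraph.fromRel_adj _ i j).symm

/-- The odd cycle inequality `OC(A)` for the cycle graph `C_m` and a subset `A` of its
edges: `∑_{i ∈ S₂} x_i - ∑_{i ∈ S₀} x_i + ∑_{e ∉ A} y_e - ∑_{e ∈ A} y_e ≤ ⌊|A|/2⌋`,
where `S₂` (resp. `S₀`) is the set of vertices incident to exactly two (resp. zero)
edges of `A`. -/
def OC {m : ℕ} (A : Finset (cycleG m).edgeSet)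
    (p : (Fin m → ℝ) × (↥(cycleG m).edgeSet → ℝ)) : Prop :=
  (∑ i ∈ Finset.univ.filter
      (fun i : Fin m =>
        (A.filter fun e : (cycleG m).edgeSet => i ∈ (e : Sym2 (Fin m))).card = 2), p.1 i)
  - (∑ i ∈ Finset.univ.filter
      (fun i : Fin m =>
        (A.filter fun e : (cycleG m).edgeSet => i ∈ (e : Sym2 (Fin m))).card = 0), p.1 i)
  + (∑ e ∈ Aᶜ, p.2 e) - (∑ e ∈ A, p.2 e) ≤ ((A.card / 2 : ℕ) : ℝ)

/-!
The points of `P(G)` are the expectations of random 0/1 vertices, so `p ∈ P(G)` amounts to events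
`S_i` with `x_i = vol S_i` and `y_{ij} = vol (S_i ∩ S_j)`; we look for them in `I = [0, 1]`. In the
cut coordinates `z_{ij} = x_i + x_j - 2 y_{ij} = vol (S_i ∆ S_j)` the constraints of `Q(G)` are
triangle inequalities, and on a cycle `OC(A)` becomes `1 ≤ ∑_{e ∈ A} (1 - z_e) + ∑_{e ∉ A} z_e`.

A 0/1 vector switches value an even number of times around the cycle, so the edges where it
switches are never exactly those of an odd set `A`, and the inequality holds at every vertex.

Conversely, triangulate the cycle by chords from vertex `0`. The events can be chosen one at a time,
each in prescribed position relative to `S_0` and its predecessor, as soon as every triangle has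
feasible side lengths. By Helly's theorem on the line a feasible length for the next chord exists
provided it respects the shortest even and odd paths, and for the closing edge this is exactly what
the odd cycle inequalities say.
-/

open scoped unitInterval symmDiff

/-- The facets of the cut polytope of a triangle: `a`, `b`, `c` are to be the measures of `A`, `B`
and `A ∆ B` for two events `A`, `B` of a probability space, or equivalently the three pairwise
distances of three events. -/
structure IsCutTriple (a b c : ℝ) : Prop where
  fst_le : a ≤ b + c
  snd_le : b ≤ a + c
  thd_le : c ≤ a + b
  add_le : a + b + c ≤ 2

lemma IsCutTriple.fst_mem_Icc {a b c : ℝ} (h : IsCutTriple a b c) : a ∈ Set.Icc 0 1 := by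
  obtain ⟨h1, h2, h3, h4⟩ := h
  constructor <;> linarith

lemma IsCutTriple.zero_left {a b c : ℝ} (h : IsCutTriple a b c) : IsCutTriple 0 c c := by
  obtain ⟨h1, h2, h3, h4⟩ := h
  constructor <;> linarith

lemma exists_measurableSet_subset_volume_eq {A : Set I} (hA : MeasurableSet A) {t : ℝ}
    (ht : t ∈ Set.Icc 0 (volume.real A)) :
    ∃ B ⊆ A, MeasurableSet B ∧ volume.real B = t := by
  let f : I → ℝ := fun r ↦ volume.real (A ∩ Set.Iic r)
  have hf : Continuous f := by
    refine (LipschitzWith.of_le_add fun r s ↦ ?_).continuous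
    have hsub : A ∩ Set.Iic r ⊆ A ∩ Set.Iic s ∪ Set.uIcc s r := by
      rintro a ⟨haA, har⟩
      rcases le_total a s with has | hsa
      · exact .inl ⟨haA, has⟩
      · exact .inr (Set.mem_uIcc_of_le hsa har)
    calc f r ≤ volume.real (A ∩ Set.Iic s ∪ Set.uIcc s r) := measureReal_mono hsub
      _ ≤ f s + volume.real (Set.uIcc s r) := measureReal_union_le _ _
      _ = f s + dist r s := by
        simp [f, measureReal_def, unitInterval.volume_uIcc, edist_dist]
  have h0 : f 0 = 0 :=
    measureReal_mono_null (s₂ := {0}) (fun _ ha ↦ le_antisymm ha.2 unitInterval.nonneg')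
      (by simp [measureReal_def])
  have h1 : f 1 = volume.real A := by
    have hIic : Set.Iic (1 : I) = Set.univ := Set.Iic_top
    simp only [f, hIic, Set.inter_univ]
  obtain ⟨r, hr⟩ := intermediate_value_univ 0 1 hf (h0 ▸ h1 ▸ ht)
  exact ⟨A ∩ Set.Iic r, Set.inter_subset_left, hA.inter measurableSet_Iic, hr⟩

section

variable {Ω : Type*} [MeasurableSpace Ω] {μ : Measure Ω} [IsFiniteMeasure μ]

lemma measureReal_symmDiff_eq_add_sub {A B : Set Ω} (hA : MeasurableSet A)
    (hB : MeasurableSet B) :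
    μ.real (A ∆ B) = μ.real A + μ.real B - 2 * μ.real (A ∩ B) := by
  rw [measureReal_symmDiff_eq hA hB]
  have h₁ := measureReal_sdiff_add_inter (μ := μ) (s := A) hB
  have h₂ := measureReal_sdiff_add_inter (μ := μ) (s := B) hA
  rw [Set.inter_comm] at h₂
  linarith
end

lemma exists_atom_split {α β γ δ c p q : ℝ} (hα : 0 ≤ α) (hβ : 0 ≤ β) (hγ : 0 ≤ γ) (hδ : 0 ≤ δ)
    (hsum : α + β + γ + δ = 1) (hA : IsCutTriple (α + β) c p) (hB : IsCutTriple (α + γ) c q)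
    (hAB : IsCutTriple (β + γ) p q) :
    ∃ t ∈ Set.Icc 0 α, ∃ u ∈ Set.Icc 0 β, ∃ v ∈ Set.Icc 0 γ, ∃ w ∈ Set.Icc 0 δ,
      t + u + v + w = c ∧ α + β + c - 2 * (t + u) = p ∧ α + γ + c - 2 * (t + v) = q := by
  obtain ⟨a1, a2, a3, a4⟩ := hA
  obtain ⟨b1, b2, b3, b4⟩ := hB
  obtain ⟨c1, c2, c3, c4⟩ := hAB
  -- `r` and `s` are forced to be `t + u` and `t + v`, which leaves only bounds on `t`.
  let r := (α + β + c - p) / 2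
  let s := (α + γ + c - q) / 2
  obtain ⟨t, hl, hr⟩ := exists_between_of_forall_le (s := {0, r - β, s - γ, r + s - c})
    (t := {α, r, s, δ - c + r + s}) (Set.insert_nonempty _ _) (Set.insert_nonempty _ _) (by
      simp only [Set.mem_insert_iff, Set.mem_singleton_iff, forall_eq_or_imp, forall_eq, r, s]
      and_intros <;> linarith)
  simp only [mem_upperBounds, mem_lowerBounds, Set.mem_insert_iff, Set.mem_singleton_iff,
    forall_eq_or_imp, forall_eq] at hl hr
  refine ⟨t, ⟨?_, ?_⟩, r - t, ⟨?_, ?_⟩, s - t, ⟨?_, ?_⟩, c - r - s + t, ⟨?_, ?_⟩, ?_, ?_, ?_⟩ <;>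
    first | linarith | (simp only [r, s]; ring)

lemma exists_measurableSet_volume_inter_atoms_eq {A B : Set I} (hA : MeasurableSet A)
    (hB : MeasurableSet B) {t u v w : ℝ} (ht : t ∈ Set.Icc 0 (volume.real (A ∩ B)))
    (hu : u ∈ Set.Icc 0 (volume.real (A ∩ Bᶜ))) (hv : v ∈ Set.Icc 0 (volume.real (Aᶜ ∩ B)))
    (hw : w ∈ Set.Icc 0 (volume.real (Aᶜ ∩ Bᶜ))) :
    ∃ C, MeasurableSet C ∧ volume.real (C ∩ A ∩ B) = t ∧ volume.real (C ∩ A ∩ Bᶜ) = u ∧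
      volume.real (C ∩ Aᶜ ∩ B) = v ∧ volume.real (C ∩ Aᶜ ∩ Bᶜ) = w := by
  obtain ⟨T, hTsub, hT, rfl⟩ := exists_measurableSet_subset_volume_eq (hA.inter hB) ht
  obtain ⟨U, hUsub, hU, rfl⟩ := exists_measurableSet_subset_volume_eq (hA.inter hB.compl) hu
  obtain ⟨V, hVsub, hV, rfl⟩ := exists_measurableSet_subset_volume_eq (hA.compl.inter hB) hv
  obtain ⟨W, hWsub, hW, rfl⟩ := exists_measurableSet_subset_volume_eq (hA.compl.inter hB.compl) hw
  refine ⟨T ∪ U ∪ V ∪ W, ((hT.union hU).union hV).union hW, ?_, ?_, ?_, ?_⟩ <;>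
    congr 1 <;> grind

lemma exists_measurableSet_volume_symmDiff_eq {A B : Set I} (hA : MeasurableSet A)
    (hB : MeasurableSet B) {c p q : ℝ} (hAc : IsCutTriple (volume.real A) c p)
    (hBc : IsCutTriple (volume.real B) c q) (hpq : IsCutTriple (volume.real (A ∆ B)) p q) :
    ∃ C, MeasurableSet C ∧ volume.real C = c ∧ volume.real (A ∆ C) = p ∧
      volume.real (B ∆ C) = q := by
  have hadd (D : Set I) {E : Set I} (hE : MeasurableSet E) :
      volume.real (D ∩ E) + volume.real (D ∩ Eᶜ) = volume.real D := by
    rw [← Set.sdiff_eq]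
    exact measureReal_inter_add_sdiff hE
  have hA' := hadd A hB
  have hB' : volume.real (A ∩ B) + volume.real (Aᶜ ∩ B) = volume.real B := by
    simpa only [Set.inter_comm] using hadd B hA
  have hAB : volume.real (A ∩ Bᶜ) + volume.real (Aᶜ ∩ B) = volume.real (A ∆ B) := by
    linarith [measureReal_symmDiff_eq_add_sub (μ := volume) hA hB]
  have hsum : volume.real (A ∩ B) + volume.real (A ∩ Bᶜ) + volume.real (Aᶜ ∩ B)
      + volume.real (Aᶜ ∩ Bᶜ) = 1 := by
    rw [hA', add_assoc, hadd Aᶜ hB, measureReal_add_measureReal_compl hA, probReal_univ]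
  obtain ⟨t, ht, u, hu, v, hv, w, hw, hc, hp, hq⟩ := exists_atom_split measureReal_nonneg
    measureReal_nonneg measureReal_nonneg measureReal_nonneg hsum (hA' ▸ hAc) (hB' ▸ hBc)
    (hAB ▸ hpq)
  obtain ⟨C, hC, hCt, hCu, hCv, hCw⟩ :=
    exists_measurableSet_volume_inter_atoms_eq hA hB ht hu hv hw
  have hCA : volume.real (C ∩ A) = t + u := by rw [← hadd (C ∩ A) hB, hCt, hCu]
  have hCB : volume.real (C ∩ B) = t + v := by
    rw [← hadd (C ∩ B) hA, Set.inter_right_comm, hCt, Set.inter_right_comm, hCv]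
  have hCc : volume.real C = c := by
    rw [← hadd C hA, hCA, ← hadd (C ∩ Aᶜ) hB, hCv, hCw, ← hc]
    ring
  refine ⟨C, hC, hCc, ?_, ?_⟩
  · rw [measureReal_symmDiff_eq_add_sub hA hC, Set.inter_comm, hCA, hCc, ← hA', hp]
  · rw [measureReal_symmDiff_eq_add_sub hB hC, Set.inter_comm, hCB, hCc, ← hB', hq]

lemma IsCutTriple.exists_measurableSet {a b c : ℝ} (h : IsCutTriple a b c) :
    ∃ A B : Set I, MeasurableSet A ∧ MeasurableSet B ∧ volume.real A = a ∧ volume.real B = b ∧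
      volume.real (A ∆ B) = c := by
  obtain ⟨A, -, hA, rfl⟩ := exists_measurableSet_subset_volume_eq .univ
    (t := a) (by simpa using h.fst_mem_Icc)
  obtain ⟨B, hB, hBb, hAB, -⟩ :=
    exists_measurableSet_volume_symmDiff_eq hA hA h h (by simpa using h.zero_left)
  exact ⟨A, B, hA, hB, rfl, hBb, hAB⟩

/-- `∑_{i ∈ s, i ∈ F} (1 - z i) + ∑_{i ∈ s, i ∉ F} z i`, which for values `z i ∈ [0, 1]` is
the `ℓ¹`-distance on `s` from `z` to the indicator of `F`. In cut coordinates the odd cycle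
inequality of `F` says that it is at least `1`. -/
def switchedSum {ι : Type*} [DecidableEq ι] (z : ι → ℝ) (F s : Finset ι) : ℝ :=
  ∑ i ∈ s, if i ∈ F then 1 - z i else z i

section

variable {ι : Type*} [DecidableEq ι] (z : ι → ℝ) {F s : Finset ι} {a : ι}

lemma switchedSum_insert (has : a ∉ s) (haF : a ∉ F) :
    switchedSum z F (insert a s) = z a + switchedSum z F s := by
  rw [switchedSum, Finset.sum_insert has, if_neg haF, switchedSum]

lemma switchedSum_insert_insert (has : a ∉ s) :
    switchedSum z (insert a F) (insert a s) = 1 - z a + switchedSum z F s := by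
  rw [switchedSum, Finset.sum_insert has, if_pos (Finset.mem_insert_self a F)]
  congr 1
  refine Finset.sum_congr rfl fun i hi ↦ ?_
  simp only [Finset.mem_insert, ne_of_mem_of_not_mem hi has, false_or]

end

/-- The least `switchedSum z F (range (n + 1))` over the sets `F ⊆ range (n + 1)` whose cardinality
is odd (`b = true`) or even (`b = false`). It is the length of a shortest walk along the first
`n + 1` edges of the double cover of a path, where crossing edge `i` costs `z i` within a sheet and
`1 - z i` between sheets. -/
def parityCost (z : ℕ → ℝ) : ℕ → Bool → ℝ
  | 0, b => if b then 1 - z 0 else z 0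
  | n + 1, b => min (parityCost z n b + z (n + 1)) (parityCost z n (!b) + (1 - z (n + 1)))

lemma exists_switchedSum_eq_parityCost (z : ℕ → ℝ) (n : ℕ) (b : Bool) :
    ∃ F ⊆ Finset.range (n + 1), (Odd F.card ↔ b) ∧
      switchedSum z F (Finset.range (n + 1)) = parityCost z n b := by
  induction n generalizing b with
  | zero =>
    cases b
    · exact ⟨∅, by simp, by simp, by simp [switchedSum, parityCost]⟩
    · exact ⟨{0}, by simp, by simp, by simp [switchedSum, parityCost]⟩
  | succ n ih =>
    have hn : n + 1 ∉ Finset.range (n + 1) := Finset.notMem_range_self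
    rw [parityCost, Finset.range_add_one (n := n + 1)]
    rcases min_choice (parityCost z n b + z (n + 1)) (parityCost z n (!b) + (1 - z (n + 1)))
      with hmin | hmin <;> rw [hmin]
    · obtain ⟨F, hF, hodd, hcost⟩ := ih b
      exact ⟨F, hF.trans (Finset.subset_insert _ _), hodd,
        by rw [switchedSum_insert z hn (mt (@hF _) hn), hcost, add_comm]⟩
    · obtain ⟨F, hF, hodd, hcost⟩ := ih !b
      refine ⟨insert (n + 1) F, Finset.insert_subset_insert _ hF, ?_,
        by rw [switchedSum_insert_insert z hn, hcost, add_comm]⟩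
      rw [Finset.card_insert_of_notMem (mt (@hF _) hn), Nat.odd_add_one, hodd]
      cases b <;> decide

lemma parityCost_bounds {x z : ℕ → ℝ} (n : ℕ)
    (h : ∀ i ≤ n, IsCutTriple (x i) (x (i + 1)) (z i)) :
    1 ≤ parityCost z n false + parityCost z n true ∧
      |x 0 - x (n + 1)| ≤ parityCost z n false ∧ |1 - x 0 - x (n + 1)| ≤ parityCost z n true := by
  simp only [abs_le']
  induction n with
  | zero =>
    obtain ⟨h1, h2, h3, h4⟩ := h 0 le_rfl
    simp only [parityCost, zero_add, if_true, Bool.false_eq_true, if_false] at *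
    and_intros <;> linarith
  | succ n ih =>
    obtain ⟨hsum, ⟨hf, hf'⟩, ht, ht'⟩ := ih fun i hi ↦ h i (hi.trans n.le_succ)
    obtain ⟨h1, h2, h3, h4⟩ := h (n + 1) le_rfl
    simp only [parityCost, Bool.not_false, Bool.not_true, le_min_iff, min_add, add_min]
    and_intros <;> linarith

lemma exists_chord_length {a b c z w u v : ℝ} (hbc : IsCutTriple b c z) (hac : IsCutTriple a c w)
    (huv : 1 ≤ u + v) (hu : |a - b| ≤ u) (hv : |1 - a - b| ≤ v)
    (hw : w ≤ min (u + z) (v + (1 - z))) (hw' : 1 ≤ min (v + z) (u + (1 - z)) + w) :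
    ∃ w', IsCutTriple a b w' ∧ IsCutTriple w' w z ∧ w' ≤ u ∧ 1 ≤ v + w' := by
  -- Each of the four conclusions bounds `w'` from below and above; compare the bounds pairwise.
  obtain ⟨b1, b2, b3, b4⟩ := hbc
  obtain ⟨a1, a2, a3, a4⟩ := hac
  rw [abs_le] at hu hv
  rw [← sub_le_iff_le_add, le_min_iff] at hw'
  rw [le_min_iff] at hw
  obtain ⟨w', hl, hr⟩ := exists_between_of_forall_le (s := {a - b, b - a, z - w, w - z, 1 - v})
    (t := {a + b, 2 - a - b, z + w, 2 - z - w, u}) (Set.insert_nonempty _ _)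
    (Set.insert_nonempty _ _) (by
      simp only [Set.mem_insert_iff, Set.mem_singleton_iff, forall_eq_or_imp, forall_eq]
      and_intros <;> linarith)
  simp only [mem_upperBounds, mem_lowerBounds, Set.mem_insert_iff, Set.mem_singleton_iff,
    forall_eq_or_imp, forall_eq] at hl hr
  refine ⟨w', ⟨?_, ?_, ?_, ?_⟩, ⟨?_, ?_, ?_, ?_⟩, ?_, ?_⟩ <;> linarith

lemma exists_measurableSet_of_path {x z : ℕ → ℝ} (n : ℕ)
    (h : ∀ i ≤ n, IsCutTriple (x i) (x (i + 1)) (z i)) {w : ℝ}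
    (hw : IsCutTriple (x 0) (x (n + 1)) w) (heven : w ≤ parityCost z n false)
    (hodd : 1 ≤ parityCost z n true + w) :
    ∃ S : ℕ → Set I, (∀ i, MeasurableSet (S i)) ∧ (∀ i ≤ n + 1, volume.real (S i) = x i) ∧
      (∀ i ≤ n, volume.real (S i ∆ S (i + 1)) = z i) ∧ volume.real (S 0 ∆ S (n + 1)) = w := by
  induction n generalizing w with
  | zero =>
    have hwz : w = z 0 := by
      simp only [parityCost, Bool.false_eq_true, if_false, if_true] at heven hodd
      linarith
    obtain ⟨A, B, hA, hB, hAx, hBx, hABw⟩ := hw.exists_measurableSet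
    refine ⟨fun i ↦ if i = 0 then A else B, fun i ↦ ?_, fun i hi ↦ ?_, fun i hi ↦ ?_, by simpa⟩
    · by_cases hi : i = 0 <;> simpa [hi]
    · interval_cases i <;> simpa
    · interval_cases i
      simpa [← hwz]
  | succ n ih =>
    have hinit : ∀ i ≤ n, IsCutTriple (x i) (x (i + 1)) (z i) :=
      fun i hi ↦ h i (hi.trans n.le_succ)
    obtain ⟨hsum, hf, ht⟩ := parityCost_bounds n hinit
    obtain ⟨w', hw', hww', heven', hodd'⟩ :=
      exists_chord_length (h (n + 1) le_rfl) hw hsum hf ht heven hodd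
    obtain ⟨S, hS, hSx, hSz, hSw⟩ := ih hinit hw' heven' hodd'
    obtain ⟨C, hC, hCx, hCw, hCz⟩ := exists_measurableSet_volume_symmDiff_eq (hS 0) (hS (n + 1))
      (c := x (n + 2)) (p := w) (q := z (n + 1)) (by rwa [hSx 0 (Nat.zero_le _)])
      (by rw [hSx _ le_rfl]; exact h _ le_rfl) (by rwa [hSw])
    have hne {i : ℕ} (hi : i ≤ n + 1) : Function.update S (n + 2) C i = S i :=
      Function.update_of_ne (by lia) _ _
    have hnew : Function.update S (n + 2) C (n + 2) = C := Function.update_self ..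
    refine ⟨Function.update S (n + 2) C, fun i ↦ ?_, fun i hi ↦ ?_, fun i hi ↦ ?_, ?_⟩
    · rcases eq_or_ne i (n + 2) with rfl | hi
      · rwa [hnew]
      · rw [Function.update_of_ne hi]
        exact hS i
    · rcases hi.eq_or_lt with rfl | hi
      · rw [hnew, hCx]
      · rw [hne (by lia), hSx i (by lia)]
    · rcases hi.eq_or_lt with rfl | hi
      · rw [hnew, hne le_rfl, hCz]
      · rw [hne (by lia), hne (by lia), hSz i (by lia)]
    · rw [hnew, hne (Nat.zero_le _), hCw]

lemma exists_measurableSet_of_cycle {n : ℕ} {x z : Fin (n + 2) → ℝ}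
    (h : ∀ k, IsCutTriple (x k) (x (k + 1)) (z k))
    (hodd : ∀ F : Finset (Fin (n + 2)), Odd F.card → 1 ≤ switchedSum z F Finset.univ) :
    ∃ S : Fin (n + 2) → Set I, (∀ k, MeasurableSet (S k)) ∧ (∀ k, volume.real (S k) = x k) ∧
      ∀ k, volume.real (S k ∆ S (k + 1)) = z k := by
  let x' : ℕ → ℝ := fun i ↦ x (Fin.ofNat (n + 2) i)
  let z' : ℕ → ℝ := fun i ↦ z (Fin.ofNat (n + 2) i)
  have hsucc (i : ℕ) : Fin.ofNat (n + 2) (i + 1) = Fin.ofNat (n + 2) i + 1 :=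
    Fin.ext (by simp [Fin.val_add])
  have htriple (i : ℕ) : IsCutTriple (x' i) (x' (i + 1)) (z' i) := by
    simpa only [x', z', hsucc] using h (Fin.ofNat (n + 2) i)
  have hcost : 1 ≤ parityCost z' (n + 1) true := by
    obtain ⟨F, hF, hFodd, hFcost⟩ := exists_switchedSum_eq_parityCost z' (n + 1) true
    have hlt : ∀ i ∈ F, i < n + 2 := fun i hi ↦ Finset.mem_range.mp (hF hi)
    have hsum := hodd (F.attachFin hlt) (by simpa using hFodd)
    rw [← hFcost, switchedSum, ← Fin.sum_univ_eq_sum_range]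
    simpa [switchedSum, z'] using hsum
  simp only [parityCost, le_min_iff, Bool.not_true] at hcost
  have hclose : IsCutTriple (x' 0) (x' (n + 1)) (z' (n + 1)) := by
    obtain ⟨h1, h2, h3, h4⟩ := htriple (n + 1)
    have hwrap : x' (n + 2) = x' 0 := by simp [x']
    rw [hwrap] at h1 h2 h3 h4
    constructor <;> linarith
  obtain ⟨S, hS, hSx, hSz, hSw⟩ := exists_measurableSet_of_path n (fun i _ ↦ htriple i) hclose
    (by linarith [hcost.2]) hcost.1
  refine ⟨fun k ↦ S k, fun k ↦ hS k, fun k ↦ ?_, fun k ↦ ?_⟩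
  · rw [hSx k (by lia)]
    simp [x']
  · rcases Fin.eq_castSucc_or_eq_last k with ⟨k, rfl⟩ | rfl
    · simpa [z'] using hSz k k.is_le
    · simpa [z', symmDiff_comm] using hSw

section

variable {V : Type*} (G : SimpleGraph V)

/-- The generators of `P(G)`: `BQPSet G` is by definition the convex hull of `bqpVertices G`. -/
def bqpVertices : Set ((V → ℝ) × (G.edgeSet → ℝ)) :=
  {p | (∀ i, p.1 i = 0 ∨ p.1 i = 1) ∧
    ∀ (i j : V) (h : G.Adj i j),
      p.2 ⟨s(i, j), (SimpleGraph.mem_edgeSet _).mpr h⟩ = p.1 i * p.1 j}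

lemma bqpVertices_subset_QSet : bqpVertices G ⊆ QSet G := by
  rintro p ⟨hx, hy⟩
  have hmem (i : V) : p.1 i ∈ I := by rcases hx i with h | h <;> simp [h]
  refine ⟨hmem, ?_, fun i j hij ↦ ?_⟩
  · rintro ⟨⟨i, j⟩, hij⟩
    exact hy i j hij ▸ unitInterval.mul_mem (hmem i) (hmem j)
  · rw [hy i j hij]
    rcases hx i with hi | hi <;> rcases hx j with hj | hj <;> norm_num [hi, hj]

lemma convex_QSet : Convex ℝ (QSet G) := by
  rintro p ⟨hpx, hpy, hp⟩ q ⟨hqx, hqy, hq⟩ a b ha hb hab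
  refine ⟨fun i ↦ convex_Icc 0 1 (hpx i) (hqx i) ha hb hab,
    fun e ↦ convex_Icc 0 1 (hpy e) (hqy e) ha hb hab, fun i j hij ↦ ?_⟩
  obtain ⟨hp0, hpi, hpj, hpij⟩ := hp i j hij
  obtain ⟨hq0, hqi, hqj, hqij⟩ := hq i j hij
  simp only [Prod.fst_add, Prod.snd_add, Prod.smul_fst, Prod.smul_snd, Pi.add_apply,
    Pi.smul_apply, smul_eq_mul]
  refine ⟨by positivity, by gcongr, by gcongr, ?_⟩
  linear_combination a * hpij + b * hqij + hab

lemma BQPSet_subset_QSet : BQPSet G ⊆ QSet G :=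
  convexHull_min (bqpVertices_subset_QSet G) (convex_QSet G)

lemma finite_bqpVertices [Finite V] : (bqpVertices G).Finite := by
  refine .of_injOn (t := {x : V → ℝ | ∀ i, x i ∈ ({0, 1} : Set ℝ)}) (f := Prod.fst)
    (fun p hp ↦ hp.1) ?_ (.pi' fun _ ↦ Set.toFinite {0, 1})
  rintro p ⟨-, hp⟩ q ⟨-, hq⟩ hpq
  refine Prod.ext hpq (funext ?_)
  rintro ⟨⟨i, j⟩, hij⟩
  exact (hp i j hij).trans (hpq ▸ (hq i j hij).symm)

lemma mem_BQPSet_of_measureReal [Finite V] {Ω : Type*} [MeasurableSpace Ω] (μ : Measure Ω)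
    [IsProbabilityMeasure μ] {S : V → Set Ω} (hS : ∀ i, MeasurableSet (S i))
    {p : (V → ℝ) × (G.edgeSet → ℝ)} (hx : ∀ i, p.1 i = μ.real (S i))
    (hy : ∀ e, p.2 e = μ.real (⋂ i ∈ (e : Sym2 V), S i)) : p ∈ BQPSet G := by
  classical
  have := Fintype.ofFinite V
  have : Fintype G.edgeSet := Fintype.ofFinite _
  let x : V → Ω → ℝ := fun i ↦ (S i).indicator 1
  let y : G.edgeSet → Ω → ℝ := fun e ↦ (⋂ i ∈ (e : Sym2 V), S i).indicator 1
  have hSe (e : G.edgeSet) : MeasurableSet (⋂ i ∈ (e : Sym2 V), S i) :=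
    .iInter fun i ↦ .iInter fun _ ↦ hS i
  have hxi (i : V) : Integrable (x i) μ := (integrable_const 1).indicator (hS i)
  have hyi (e : G.edgeSet) : Integrable (y e) μ := (integrable_const 1).indicator (hSe e)
  have hxI : Integrable (fun ω i ↦ x i ω) μ := .of_eval hxi
  have hyI : Integrable (fun ω e ↦ y e ω) μ := .of_eval hyi
  have hvertex (ω : Ω) : ((fun i ↦ x i ω, fun e ↦ y e ω) : (V → ℝ) × (G.edgeSet → ℝ)) ∈
      bqpVertices G := by
    refine ⟨fun i ↦ Set.indicator_eq_zero_or_self (S i) 1 ω, fun i j hij ↦ ?_⟩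
    have hinter : ⋂ k ∈ s(i, j), S k = S i ∩ S j := by ext; simp
    simp only [x, y, hinter, Set.inter_indicator_one, Pi.mul_apply]
  have hp : p = ∫ ω, (fun i ↦ x i ω, fun e ↦ y e ω) ∂μ := by
    rw [integral_pair hxI hyI]
    ext k
    · dsimp only
      rw [eval_integral hxi, integral_indicator_one (hS k), hx]
    · dsimp only
      rw [eval_integral hyi, integral_indicator_one (hSe k), hy]
  rw [hp]
  exact (convex_convexHull ℝ _).integral_mem ((finite_bqpVertices G).isClosed_convexHull ℝ)
    (.of_forall fun ω ↦ subset_convexHull ℝ _ (hvertex ω)) (hxI.prodMk hyI)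

end

lemma one_le_switchedSum_of_binary {ι : Type*} [Fintype ι] [DecidableEq ι] (π : Equiv.Perm ι)
    {x : ι → ℝ} (hx : ∀ i, x i = 0 ∨ x i = 1) {F : Finset ι} (hF : Odd F.card) :
    1 ≤ switchedSum (fun i ↦ x i + x (π i) - 2 * (x i * x (π i))) F Finset.univ := by
  let b : ι → ZMod 2 := fun i ↦ if x i = 0 then 0 else 1
  let χ : ι → ZMod 2 := fun i ↦ if i ∈ F then 1 else 0
  have hterm (i : ι) : (if i ∈ F then 1 - (x i + x (π i) - 2 * (x i * x (π i)))
      else x i + x (π i) - 2 * (x i * x (π i))) = if χ i = b i + b (π i) then 0 else 1 := by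
    rcases hx i with hi | hi <;> rcases hx (π i) with hi' | hi' <;> by_cases hiF : i ∈ F <;>
      norm_num [b, χ, hi, hi', hiF, CharTwo.add_self_eq_zero]
  obtain ⟨i, hi⟩ : ∃ i, χ i ≠ b i + b (π i) := by
    by_contra! hall
    refine ZMod.natCast_ne_zero_iff_odd.mpr hF ?_
    calc (F.card : ZMod 2) = ∑ i, χ i := by simp [χ]
      _ = ∑ i, b i + ∑ i, b (π i) := by simp only [hall, Finset.sum_add_distrib]
      _ = 0 := by rw [Equiv.sum_comp π b, CharTwo.add_self_eq_zero]
  simp only [switchedSum, hterm]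
  calc (1 : ℝ) = if χ i = b i + b (π i) then 0 else 1 := (if_neg hi).symm
    _ ≤ _ := Finset.single_le_sum (f := fun i ↦ if χ i = b i + b (π i) then (0 : ℝ) else 1)
      (fun j _ ↦ by positivity) (Finset.mem_univ i)

section

variable {n : ℕ}

lemma cycleG_adj {i j : Fin (n + 3)} : (cycleG (n + 3)).Adj i j ↔ i + 1 = j ∨ j + 1 = i := by
  have hsucc (a b : Fin (n + 3)) : ((a : ℕ) + 1) % (n + 3) = b ↔ a + 1 = b := by
    simp [Fin.ext_iff, Fin.val_add]
  rw [cycleG, SimpleGraph.fromRel_adj, hsucc, hsucc, and_iff_right_iff_imp]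
  rintro h rfl
  simp at h

lemma bijective_cycleEdge : Function.Bijective fun k : Fin (n + 3) ↦
    (⟨s(k, k + 1), cycleG_adj.mpr (.inl rfl)⟩ : (cycleG (n + 3)).edgeSet) := by
  constructor
  · intro i j hij
    rcases Sym2.eq_iff.mp (congrArg Subtype.val hij) with h | ⟨rfl, h⟩
    · exact h.1
    · have : (1 + 1 : Fin (n + 3)) = 0 := by simpa [add_assoc] using h
      simp [Fin.ext_iff, Fin.val_add, Nat.mod_eq_of_lt (show 2 < n + 3 by lia)] at this
  · rintro ⟨⟨i, j⟩, hij⟩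
    obtain rfl | rfl : i + 1 = j ∨ j + 1 = i := cycleG_adj.mp hij
    · exact ⟨i, rfl⟩
    · exact ⟨j, Subtype.ext Sym2.eq_swap⟩

/-- The edges of the cycle, numbered so that edge `k` joins `k` to `k + 1` (cyclically). -/
def cycleEdge : Fin (n + 3) ≃ (cycleG (n + 3)).edgeSet :=
  .ofBijective _ bijective_cycleEdge

/-- The covariance map from the boolean quadric polytope to the cut polytope: at a vertex of
`P(C_m)` this is `1` or `0` according to whether `x` switches value along edge `k`. -/
def cutCoord (p : (Fin (n + 3) → ℝ) × ((cycleG (n + 3)).edgeSet → ℝ)) (k : Fin (n + 3)) : ℝ :=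
  p.1 k + p.1 (k + 1) - 2 * p.2 (cycleEdge k)

lemma card_filter_mem_map_cycleEdge (F : Finset (Fin (n + 3))) (i : Fin (n + 3)) :
    ((F.map cycleEdge.toEmbedding).filter fun e : (cycleG (n + 3)).edgeSet ↦
      i ∈ (e : Sym2 (Fin (n + 3)))).card =
      (if i ∈ F then 1 else 0) + if i - 1 ∈ F then 1 else 0 := by
  have hmem (k : Fin (n + 3)) : i ∈ (cycleEdge k : Sym2 (Fin (n + 3))) ↔ k = i ∨ k = i - 1 := by
    rw [eq_comm, eq_sub_iff_add_eq, eq_comm (b := i)]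
    exact Sym2.mem_iff
  have hne : i ≠ i - 1 := by simp [eq_sub_iff_add_eq]
  simp only [Finset.filter_map, Finset.card_map, Function.comp_def, Equiv.coe_toEmbedding, hmem,
    Finset.filter_or, Finset.filter_eq']
  rw [Finset.card_union_of_disjoint]
  · split_ifs <;> rfl
  · split_ifs <;> simp [hne]

variable {p : (Fin (n + 3) → ℝ) × ((cycleG (n + 3)).edgeSet → ℝ)} {F : Finset (Fin (n + 3))}

lemma OC_map_cycleEdge_iff_sum_le :
    OC (F.map cycleEdge.toEmbedding) p ↔
      ∑ k, (((if k ∈ F then 1 else 0) + (if k - 1 ∈ F then 1 else 0) - 1) * p.1 k +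
        (1 - 2 * if k ∈ F then 1 else 0) * p.2 (cycleEdge k)) ≤ ((F.card / 2 : ℕ) : ℝ) := by
  have hcompl : (F.map cycleEdge.toEmbedding)ᶜ = Fᶜ.map cycleEdge.toEmbedding := by
    ext e
    obtain ⟨k, rfl⟩ := cycleEdge.surjective e
    simp
  have hsum_mem (f : Fin (n + 3) → ℝ) (s : Finset (Fin (n + 3))) :
      ∑ k ∈ s, f k = ∑ k, if k ∈ s then f k else 0 := by simp
  rw [OC, Finset.card_map, hcompl, Finset.sum_map, Finset.sum_map, hsum_mem _ F, hsum_mem _ Fᶜ,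
    Finset.sum_filter, Finset.sum_filter, ← Finset.sum_sub_distrib, ← Finset.sum_add_distrib,
    ← Finset.sum_sub_distrib]
  refine iff_of_eq (congrArg (· ≤ _) (Finset.sum_congr rfl fun k _ ↦ ?_))
  rw [card_filter_mem_map_cycleEdge]
  by_cases hk : k ∈ F <;> by_cases hk' : k - 1 ∈ F <;> simp [hk, hk'] <;> ring

lemma switchedSum_cutCoord :
    switchedSum (cutCoord p) F Finset.univ = F.card - 2 *
      ∑ k, (((if k ∈ F then 1 else 0) + (if k - 1 ∈ F then 1 else 0) - 1) * p.1 k +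
        (1 - 2 * if k ∈ F then 1 else 0) * p.2 (cycleEdge k)) := by
  have hshift : ∑ k, (1 - 2 * if k ∈ F then 1 else 0) * p.1 (k + 1) =
      ∑ k, (1 - 2 * if k - 1 ∈ F then 1 else 0) * p.1 k := by
    rw [← Equiv.sum_comp (Equiv.addRight (1 : Fin (n + 3)))
      fun k ↦ (1 - 2 * if k - 1 ∈ F then 1 else 0) * p.1 k]
    simp only [Equiv.coe_addRight, add_sub_cancel_right]
  have hcard : (F.card : ℝ) = ∑ k, if k ∈ F then 1 else 0 := by simp
  calc switchedSum (cutCoord p) F Finset.univ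
      = F.card + ∑ k, (1 - 2 * if k ∈ F then 1 else 0) * (p.1 k - 2 * p.2 (cycleEdge k))
        + ∑ k, (1 - 2 * if k ∈ F then 1 else 0) * p.1 (k + 1) := by
        rw [hcard, ← Finset.sum_add_distrib, ← Finset.sum_add_distrib, switchedSum]
        refine Finset.sum_congr rfl fun k _ ↦ ?_
        rw [cutCoord]
        split_ifs <;> ring
    _ = _ := by
        rw [hshift, add_assoc, ← Finset.sum_add_distrib, Finset.mul_sum, sub_eq_add_neg,
          ← Finset.sum_neg_distrib]
        congr 1
        exact Finset.sum_congr rfl fun k _ ↦ by ring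

lemma OC_map_cycleEdge_iff (hF : Odd F.card) :
    OC (F.map cycleEdge.toEmbedding) p ↔ 1 ≤ switchedSum (cutCoord p) F Finset.univ := by
  obtain ⟨r, hr⟩ := hF
  have hhalf : F.card / 2 = r := by lia
  have hcard : (F.card : ℝ) = 2 * r + 1 := by exact_mod_cast hr
  rw [OC_map_cycleEdge_iff_sum_le, switchedSum_cutCoord, hhalf, hcard]
  constructor <;> intro h <;> linarith

lemma forall_OC_iff :
    (∀ A : Finset (cycleG (n + 3)).edgeSet, Odd A.card → OC A p) ↔
      ∀ F : Finset (Fin (n + 3)), Odd F.card → 1 ≤ switchedSum (cutCoord p) F Finset.univ := by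
  rw [← cycleEdge.finsetCongr.forall_congr_right]
  refine forall_congr' fun F ↦ ?_
  rw [Equiv.finsetCongr_apply, Finset.card_map]
  exact forall_congr' OC_map_cycleEdge_iff

lemma isCutTriple_cutCoord (hp : p ∈ QSet (cycleG (n + 3))) (k : Fin (n + 3)) :
    IsCutTriple (p.1 k) (p.1 (k + 1)) (cutCoord p k) := by
  obtain ⟨h0, hk, hk', hadd⟩ : 0 ≤ p.2 (cycleEdge k) ∧ p.2 (cycleEdge k) ≤ p.1 k ∧
      p.2 (cycleEdge k) ≤ p.1 (k + 1) ∧ p.1 k + p.1 (k + 1) ≤ 1 + p.2 (cycleEdge k) :=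
    hp.2.2 k (k + 1) (cycleG_adj.mpr (.inl rfl))
  constructor <;> rw [cutCoord] <;> linarith

lemma convex_setOf_one_le_switchedSum_cutCoord (F : Finset (Fin (n + 3))) :
    Convex ℝ {p | 1 ≤ switchedSum (cutCoord p) F Finset.univ} := by
  intro p hp q hq a b ha hb hab
  have hcomb : switchedSum (cutCoord (a • p + b • q)) F Finset.univ =
      a * switchedSum (cutCoord p) F Finset.univ + b * switchedSum (cutCoord q) F Finset.univ := by
    simp only [switchedSum, Finset.mul_sum, ← Finset.sum_add_distrib]
    refine Finset.sum_congr rfl fun k _ ↦ ?_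
    simp only [cutCoord, Prod.fst_add, Prod.snd_add, Prod.smul_fst, Prod.smul_snd, Pi.add_apply,
      Pi.smul_apply, smul_eq_mul]
    split_ifs
    · linear_combination -hab
    · ring
  have hle := convex_Ici (1 : ℝ) hp hq ha hb hab
  exact hle.trans_eq hcomb.symm

lemma one_le_switchedSum_cutCoord_of_mem_BQPSet (hp : p ∈ BQPSet (cycleG (n + 3)))
    (hF : Odd F.card) :
    1 ≤ switchedSum (cutCoord p) F Finset.univ := by
  refine convexHull_min ?_ (convex_setOf_one_le_switchedSum_cutCoord F) hp
  rintro q ⟨hqx, hqy⟩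
  have hcut : cutCoord q = fun k ↦ q.1 k + q.1 (k + 1) - 2 * (q.1 k * q.1 (k + 1)) :=
    funext fun k ↦ congrArg (q.1 k + q.1 (k + 1) - 2 * ·)
      (hqy k (k + 1) (cycleG_adj.mpr (.inl rfl)))
  rw [Set.mem_ofPred_eq, hcut]
  exact one_le_switchedSum_of_binary (Equiv.addRight 1) hqx hF

lemma mem_BQPSet_of_one_le_switchedSum_cutCoord (hp : p ∈ QSet (cycleG (n + 3)))
    (h : ∀ F : Finset (Fin (n + 3)), Odd F.card → 1 ≤ switchedSum (cutCoord p) F Finset.univ) :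
    p ∈ BQPSet (cycleG (n + 3)) := by
  obtain ⟨S, hS, hSx, hSz⟩ := exists_measurableSet_of_cycle (isCutTriple_cutCoord hp) h
  refine mem_BQPSet_of_measureReal _ volume hS (fun k ↦ (hSx k).symm) fun e ↦ ?_
  obtain ⟨k, rfl⟩ := cycleEdge.surjective e
  have hinter : ⋂ i ∈ (cycleEdge k : Sym2 (Fin (n + 3))), S i = S k ∩ S (k + 1) := by
    ext
    simp [cycleEdge]
  have hcut := hSz k
  rw [measureReal_symmDiff_eq_add_sub (hS k) (hS (k + 1)), hSx, hSx, cutCoord] at hcut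
  rw [hinter]
  linarith

end

/-- Padberg: `P(C_m)` is exactly the set of points of `Q(C_m)` satisfying all the
odd cycle inequalities. -/
theorem BQPSet_cycle_eq (m : ℕ) (hm : 3 ≤ m) :
    BQPSet (cycleG m) = {p | p ∈ QSet (cycleG m) ∧
      ∀ A : Finset (cycleG m).edgeSet, Odd A.card → OC A p} := by
  obtain ⟨n, rfl⟩ : ∃ n, m = n + 3 := ⟨m - 3, by lia⟩
  ext p
  rw [Set.mem_ofPred_eq, forall_OC_iff]
  constructor
  · exact fun hp ↦ ⟨BQPSet_subset_QSet _ hp, fun F ↦ one_le_switchedSum_cutCoord_of_mem_BQPSet hp⟩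
  · exact fun hp ↦ mem_BQPSet_of_one_le_switchedSum_cutCoord hp.1 hp.2
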